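/- Let H be an atomic cancellative monoid. The following statements are equivalent: (1) H is permutably factorial; (2) t_p(H) = 0 and every almost prime-like element of H is prime-like; (3) t_p(H, Z_p(H)) = 0 and every almost prime-like element of H is prime-like. -/

import Mathlib

def MAtom {H : Type*} [Monoid H] (u : H) : Prop :=
  ¬ IsUnit u ∧ ∀ a b : H, u = a * b → IsUnit a ∨ IsUnit b

def TAssoc {H : Type*} [Monoid H] (a b : H) : Prop :=
  ∃ ε η : Hˣ, b = (ε : H) * a * (η : H)

def Atomic (H : Type*) [Monoid H] : Prop :=
  ∀ a : H, ¬ IsUnit a → ∃ l : List H, l ≠ [] ∧ (∀ u ∈ l, MAtom u) ∧ a = l.prod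

def T1Cond {H T : Type*} [Monoid H] [Monoid T] (φ : H →* T) : Prop :=
  (∀ t : T, ∃ (ε η : Tˣ) (a : H), t = (ε : T) * φ a * (η : T)) ∧
    ∀ a : H, IsUnit (φ a) ↔ IsUnit a

def IsTransferHom {H T : Type*} [Monoid H] [Monoid T] (φ : H →* T) : Prop :=
  T1Cond φ ∧
    ∀ (a : H) (b₁ b₂ : T), φ a = b₁ * b₂ →
      ∃ (a₁ a₂ : H) (ε : Tˣ), a = a₁ * a₂ ∧ φ a₁ = b₁ * ((ε⁻¹ : Tˣ) : T) ∧ φ a₂ = (ε : T) * b₂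

def IsWeakTransferHom {H T : Type*} [Monoid H] [Monoid T] (φ : H →* T) : Prop :=
  T1Cond φ ∧
    ∀ (a : H) (n : ℕ), 0 < n → ∀ v : Fin n → T, (∀ i, MAtom (v i)) →
      φ a = (List.ofFn v).prod →
      ∃ (u : Fin n → H) (σ : Equiv.Perm (Fin n)),
        (∀ i, MAtom (u i)) ∧ a = (List.ofFn u).prod ∧ ∀ i, TAssoc (φ (u i)) (v (σ i))

def IsIsoatomic {H T : Type*} [Monoid H] [Monoid T] (φ : H →* T) : Prop :=
  ∀ u v : H, MAtom u → MAtom v → TAssoc (φ u) (φ v) → TAssoc u v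

def lengthsOf {H : Type*} [Monoid H] (a : H) : Set ℕ :=
  {n | (n = 0 ∧ IsUnit a) ∨
    ∃ l : List H, l ≠ [] ∧ (∀ u ∈ l, MAtom u) ∧ a = l.prod ∧ l.length = n}
structure RF (H : Type*) [Monoid H] where
  u : Hˣ
  l : List H

namespace RF

variable {H : Type*} [Monoid H]

def IsRigid (z : RF H) : Prop := ∀ x ∈ z.l, MAtom x

def prod (z : RF H) : H := (z.u : H) * z.l.prod

def len (z : RF H) : ℕ := z.l.length

def mul (z w : RF H) : RF H :=
  match z.l with
  | [] => ⟨z.u * w.u, w.l⟩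
  | a :: as =>
      ⟨z.u, ((a :: as).dropLast ++
        [(a :: as).getLast (List.cons_ne_nil a as) * (w.u : H)]) ++ w.l⟩

end RF

/-- The equivalence relation on rigid factorization data: same length, and the
atoms agree up to an interpolating family of units `δ`, with the unit part
absorbing `δ 0` and `δ` becoming trivial after the last atom. -/
def RFEq {H : Type*} [Monoid H] (z w : RF H) : Prop :=
  ∃ δ : ℕ → Hˣ,
    z.l.length = w.l.length ∧ δ z.l.length = 1 ∧ w.u = z.u * (δ 0)⁻¹ ∧
    ∀ (i : ℕ) (hi : i < z.l.length) (hi' : i < w.l.length),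
      w.l.get ⟨i, hi'⟩ = ((δ i : H)) * z.l.get ⟨i, hi⟩ * (((δ (i + 1))⁻¹ : Hˣ) : H)

/-- A distance on the rigid factorizations of `H` (axioms (D1)-(D5); (D1) is stated
in the strong form saying the distance vanishes on equivalent rigid factorizations,
which encodes well-definedness on the category of rigid factorizations). -/
structure IsDistance (H : Type*) [Monoid H] (d : RF H → RF H → ℕ) : Prop where
  d_eq : ∀ z w : RF H, z.IsRigid → w.IsRigid → RFEq z w → d z w = 0
  d_symm : ∀ z w : RF H, z.IsRigid → w.IsRigid → z.prod = w.prod → d z w = d w z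
  d_tri : ∀ z w v : RF H, z.IsRigid → w.IsRigid → v.IsRigid →
    z.prod = w.prod → w.prod = v.prod → d z v ≤ d z w + d w v
  d_mul_left : ∀ x z w : RF H, x.IsRigid → z.IsRigid → w.IsRigid → z.prod = w.prod →
    d (x.mul z) (x.mul w) = d z w
  d_mul_right : ∀ y z w : RF H, y.IsRigid → z.IsRigid → w.IsRigid → z.prod = w.prod →
    d (z.mul y) (w.mul y) = d z w
  d_len : ∀ z w : RF H, z.IsRigid → w.IsRigid → z.prod = w.prod →
    (z.len - w.len ≤ d z w ∧ w.len - z.len ≤ d z w) ∧ d z w ≤ max (max z.len w.len) 1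

/-- An `N`-chain of rigid factorizations of `a` between `z` and `w`, in distance `d`. -/
def IsNChain {H : Type*} [Monoid H] (d : RF H → RF H → ℕ) (a : H) (N : ℕ∞)
    (z w : RF H) : Prop :=
  ∃ (n : ℕ) (c : ℕ → RF H), c 0 = z ∧ c n = w ∧
    (∀ i ≤ n, (c i).IsRigid ∧ (c i).prod = a) ∧
    ∀ i < n, (d (c i) (c (i + 1)) : ℕ∞) ≤ N

/-- A monotone `N`-chain: in addition the lengths are non-decreasing or non-increasing. -/
def IsMonNChain {H : Type*} [Monoid H] (d : RF H → RF H → ℕ) (a : H) (N : ℕ∞)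
    (z w : RF H) : Prop :=
  ∃ (n : ℕ) (c : ℕ → RF H), c 0 = z ∧ c n = w ∧
    (∀ i ≤ n, (c i).IsRigid ∧ (c i).prod = a) ∧
    (∀ i < n, (d (c i) (c (i + 1)) : ℕ∞) ≤ N) ∧
    ((∀ i j, i ≤ j → j ≤ n → (c i).len ≤ (c j).len) ∨
      (∀ i j, i ≤ j → j ≤ n → (c j).len ≤ (c i).len))

/-- The catenary degree of `a` in distance `d`. -/
noncomputable def catenaryDeg {H : Type*} [Monoid H] (d : RF H → RF H → ℕ) (a : H) : ℕ∞ :=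
  sInf {N : ℕ∞ | ∀ z w : RF H, z.IsRigid → w.IsRigid → z.prod = a → w.prod = a →
    IsNChain d a N z w}

/-- The monotone catenary degree of `a` in distance `d`. -/
noncomputable def catenaryDegMon {H : Type*} [Monoid H] (d : RF H → RF H → ℕ) (a : H) : ℕ∞ :=
  sInf {N : ℕ∞ | ∀ z w : RF H, z.IsRigid → w.IsRigid → z.prod = a → w.prod = a →
    IsMonNChain d a N z w}

/-- The set of distances of a set of naturals. -/
def DeltaSet (L : Set ℕ) : Set ℕ :=
  {d | 0 < d ∧ ∃ l ∈ L, l + d ∈ L ∧ ∀ m ∈ L, l < m → m < l + d → False}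
/-- Two-sided associativity is an equivalence relation. -/
def assocSetoid (H : Type*) [Monoid H] : Setoid H where
  r := TAssoc
  iseqv := by
    constructor
    · intro a; exact ⟨1, 1, by simp⟩
    · rintro a b ⟨ε, η, rfl⟩
      exact ⟨ε⁻¹, η⁻¹, by simp [mul_assoc]⟩
    · rintro a b c ⟨ε, η, rfl⟩ ⟨ε', η', rfl⟩
      exact ⟨ε' * ε, η * η', by simp [mul_assoc]⟩

/-- Associativity classes of elements of `H`. -/
def AClass (H : Type*) [Monoid H] := Quotient (assocSetoid H)

def mkCls {H : Type*} [Monoid H] (a : H) : AClass H := Quotient.mk (assocSetoid H) a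

/-- The distance between two multisets: `max {card s - card (s ∩ t), card t - card (s ∩ t)}`. -/
noncomputable def mdist {α : Type*} (s t : Multiset α) : ℕ :=
  letI := Classical.decEq α
  max (Multiset.card s - Multiset.card (s ∩ t)) (Multiset.card t - Multiset.card (s ∩ t))

/-- The multiset of associativity classes of the entries of a list. -/
def clsList {H : Type*} [Monoid H] (l : List H) : Multiset (AClass H) :=
  ((l.map mkCls : List (AClass H)) : Multiset (AClass H))

/-- The permutable distance between two rigid factorizations. -/
noncomputable def dpRF {H : Type*} [Monoid H] (z w : RF H) : ℕ :=
  mdist (clsList z.l) (clsList w.l)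

/-- The permutable catenary degree of an element. -/
noncomputable def cpDeg {H : Type*} [Monoid H] (a : H) : ℕ∞ :=
  sInf {N : ℕ∞ | ∀ z w : RF H, z.IsRigid → w.IsRigid → z.prod = a → w.prod = a →
    ∃ (n : ℕ) (c : ℕ → RF H), c 0 = z ∧ c n = w ∧
      (∀ i ≤ n, (c i).IsRigid ∧ (c i).prod = a) ∧
      ∀ i < n, (dpRF (c i) (c (i + 1)) : ℕ∞) ≤ N}

/-- The permutable catenary degree of a monoid. -/
noncomputable def cpMon (H : Type*) [Monoid H] : ℕ∞ := ⨆ a : H, cpDeg a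

/-- The map induced on rigid factorization data by a monoid homomorphism. -/
def mapRF {H T : Type*} [Monoid H] [Monoid T] (φ : H →* T) (z : RF H) : RF T :=
  ⟨Units.map φ z.u, z.l.map φ⟩
/-- Divisibility up to permutation: `a ∣_p b`. -/
def dvdP {H : Type*} [Monoid H] (a b : H) : Prop :=
  ∃ (k l : ℕ) (u : Fin k → H) (v : Fin l → H),
    (∀ i, MAtom (u i)) ∧ (∀ j, MAtom (v j)) ∧
    TAssoc a (List.ofFn u).prod ∧ TAssoc b (List.ofFn v).prod ∧
    ∃ σ : Fin k ↪ Fin l, ∀ i, TAssoc (u i) (v (σ i))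

/-- An almost prime-like element (with respect to `∣_p`). -/
def APLike {H : Type*} [Monoid H] (q : H) : Prop :=
  ¬ IsUnit q ∧ ∀ a b : H, dvdP q (a * b) → dvdP q a ∨ dvdP q b

/-- The number of entries of `l` associated to `q`. -/
noncomputable def countAssoc {H : Type*} [Monoid H] (l : List H) (q : H) : ℕ :=
  Nat.card {i : Fin l.length // TAssoc (l.get i) q}

/-- The `q`-adic valuation of `a`: the set of numbers of occurrences (up to associativity)
of `q` in factorizations of `a` into atoms. -/
def Vq {H : Type*} [Monoid H] (q a : H) : Set ℕ :=
  {n | ∃ l : List H, (∀ u ∈ l, MAtom u) ∧ TAssoc a l.prod ∧ countAssoc l q = n}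

/-- A prime-like element: almost prime-like, with singleton `q`-adic valuations. -/
def PrimeLike {H : Type*} [Monoid H] (q : H) : Prop :=
  APLike q ∧ ∀ a : H, ∃ n : ℕ, Vq q a = {n}

/-- `H` is permutably factorial. -/
def PermutablyFactorial (H : Type*) [Monoid H] : Prop :=
  Atomic H ∧
    ∀ (k l : ℕ) (u : Fin k → H) (v : Fin l → H),
      (∀ i, MAtom (u i)) → (∀ j, MAtom (v j)) →
      (List.ofFn u).prod = (List.ofFn v).prod →
      ∃ σ : Fin k ≃ Fin l, ∀ i, TAssoc (u i) (v (σ i))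
/-- Permutable factorizations of `a`, represented as multisets of associativity
classes of atoms realizing `a` (up to a unit). -/
def ZpSet {H : Type*} [Monoid H] (a : H) : Set (Multiset (AClass H)) :=
  {s | ∃ (ε : Hˣ) (l : List H), (∀ u ∈ l, MAtom u) ∧ a = (ε : H) * l.prod ∧ s = clsList l}

/-- The permutable tame degree `t_p(a, x)`. -/
noncomputable def tpEl {H : Type*} [Monoid H] (a : H) (x : Multiset (AClass H)) : ℕ∞ :=
  sInf {N : ℕ∞ | (∃ z₀ ∈ ZpSet a, x ≤ z₀) →
    ∀ z ∈ ZpSet a, ∃ z' ∈ ZpSet a, x ≤ z' ∧ (mdist z z' : ℕ∞) ≤ N}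

/-- The permutable tame degree `t_p(H)`. -/
noncomputable def tpMon (H : Type*) [Monoid H] : ℕ∞ :=
  ⨆ (u : H) (_ : MAtom u) (a : H), tpEl a {mkCls u}

/-- The permutable tame degree `t_p(H, Z_p(H))`. -/
noncomputable def tpZpMon (H : Type*) [Monoid H] : ℕ∞ :=
  ⨆ (a : H) (x : Multiset (AClass H)) (_ : ∃ b : H, x ∈ ZpSet b), tpEl a x

/-- The map induced on associativity classes by a monoid homomorphism. -/
def mapCls {H T : Type*} [Monoid H] [Monoid T] (φ : H →* T) : AClass H → AClass T :=
  Quotient.lift (fun a => mkCls (φ a)) (by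
    rintro a b ⟨ε, η, rfl⟩
    exact Quotient.sound ⟨Units.map φ ε, Units.map φ η, by simp⟩)

/-!
The permutable tame degree `t_p(a, x)` vanishes exactly when `x` is contained in every permutable
factorization of `a` as soon as it is contained in one. If this holds for the class of an atom `q`,
then comparing an arbitrary factorization of `ab` with the concatenation of a factorization of `a`
and one of `b` shows that `q` is almost prime-like. So if `t_p(H) = 0` and almost prime-like
elements are prime-like, each atom occurs equally often in all factorizations of an element, which
therefore has only one permutable factorization. Conversely, with only one permutable factorization
per element, all tame degrees vanish and all valuations are single-valued.
-/

section MultisetMatching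

variable {α β γ : Type*} [Fintype α] [Fintype β] {f : α → γ} {g : β → γ}

theorem map_univ_le_map_univ_iff_exists_embedding :
    Finset.univ.val.map f ≤ Finset.univ.val.map g ↔ ∃ σ : α ↪ β, ∀ i, f i = g (σ i) := by
  classical
  constructor
  · intro h
    have fiber_embeds (c : γ) : Nonempty ({i // f i = c} ↪ {j // g j = c}) := by
      rw [Function.Embedding.nonempty_iff_card_le, Fintype.card_subtype, Fintype.card_subtype]
      have count_le := Multiset.count_le_of_le c h
      simp only [Multiset.count_map, eq_comm (a := c)] at count_le
      exact count_le
    let e (c : γ) : {i // f i = c} ↪ {j // g j = c} := (fiber_embeds c).some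
    exact ⟨(Equiv.sigmaFiberEquiv f).symm.toEmbedding.trans
      ((Function.Embedding.sigmaMap (.refl γ) e).trans (Equiv.sigmaFiberEquiv g).toEmbedding),
      fun i => (e (f i) ⟨i, rfl⟩).2.symm⟩
  · rintro ⟨σ, hσ⟩
    calc Finset.univ.val.map f = (Finset.univ.map σ).val.map g := by
          simp [funext hσ]
      _ ≤ Finset.univ.val.map g :=
          Multiset.map_le_map (Finset.val_le_iff.2 (Finset.subset_univ _))

theorem map_univ_eq_map_univ_iff_exists_equiv :
    Finset.univ.val.map f = Finset.univ.val.map g ↔ ∃ σ : α ≃ β, ∀ i, f i = g (σ i) := by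
  constructor
  · intro h
    have card_eq : Fintype.card α = Fintype.card β := by
      simpa using! congrArg Multiset.card h
    obtain ⟨σ, hσ⟩ := map_univ_le_map_univ_iff_exists_embedding.1 h.le
    exact ⟨.ofBijective σ ((Fintype.bijective_iff_injective_and_card σ).2 ⟨σ.injective, card_eq⟩),
      hσ⟩
  · rintro ⟨σ, hσ⟩
    exact le_antisymm (map_univ_le_map_univ_iff_exists_embedding.2 ⟨σ.toEmbedding, hσ⟩)
      (map_univ_le_map_univ_iff_exists_embedding.2 ⟨σ.symm.toEmbedding, fun j => by simp [hσ]⟩)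

end MultisetMatching

theorem mdist_eq_zero_iff {α : Type*} {s t : Multiset α} : mdist s t = 0 ↔ s = t := by
  let _ := Classical.decEq α
  calc mdist s t = 0
      ↔ s.card ≤ (s ∩ t).card ∧ t.card ≤ (s ∩ t).card := by
        rw [mdist, Nat.max_eq_zero_iff, Nat.sub_eq_zero_iff_le, Nat.sub_eq_zero_iff_le]
    _ ↔ s = t := by
        constructor
        · rintro ⟨hs, ht⟩
          exact (Multiset.eq_of_le_of_card_le Multiset.inter_le_left hs).symm.trans
            (Multiset.eq_of_le_of_card_le Multiset.inter_le_right ht)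
        · rintro rfl
          simp [← Multiset.inf_eq_inter]

section Factorizations

variable {H : Type*} [Monoid H] {a b q : H} {l m : List H}

theorem mkCls_eq_mkCls_iff : mkCls a = mkCls b ↔ TAssoc a b :=
  Quotient.eq (r := assocSetoid H)

theorem TAssoc.symm (h : TAssoc a b) : TAssoc b a :=
  (assocSetoid H).iseqv.symm h

theorem matom_iff_irreducible : MAtom a ↔ Irreducible a :=
  irreducible_iff.symm

theorem MAtom.of_tassoc (ha : MAtom a) (h : TAssoc a b) : MAtom b := by
  obtain ⟨ε, η, rfl⟩ := h
  rwa [matom_iff_irreducible, irreducible_mul_units, irreducible_units_mul,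
    ← matom_iff_irreducible]

-- If `a * c = 1`, then `a = a * (c * a)`, so either `a` or `c * a` is a unit.
theorem MAtom.not_isUnit_mul (ha : MAtom a) (b : H) : ¬ IsUnit (a * b) := by
  intro hab
  obtain ⟨c, hc⟩ : ∃ c, a * c = 1 := by
    obtain ⟨d, hd⟩ := hab.exists_right_inv
    exact ⟨b * d, by rwa [← mul_assoc]⟩
  have left_unit : IsUnit (c * a) :=
    (ha.2 a (c * a) (by rw [← mul_assoc, hc, one_mul])).resolve_left ha.1
  obtain ⟨d, hd⟩ := left_unit.exists_left_inv
  exact ha.1 (isUnit_iff_exists_and_exists.2 ⟨⟨c, hc⟩, d * c, by rwa [mul_assoc]⟩)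

theorem eq_nil_of_isUnit_prod (hl : ∀ u ∈ l, MAtom u) (h : IsUnit l.prod) : l = [] := by
  cases l with
  | nil => rfl
  | cons x t =>
    rw [List.prod_cons] at h
    exact absurd h ((hl x List.mem_cons_self).not_isUnit_mul t.prod)

theorem exists_eq_singleton_of_matom_prod (hl : ∀ u ∈ l, MAtom u) (h : MAtom l.prod) :
    ∃ x, l = [x] := by
  cases l with
  | nil => exact absurd isUnit_one h.1
  | cons x t =>
    obtain ⟨hx, ht⟩ := List.forall_mem_cons.1 hl
    have unit_tail : IsUnit t.prod := (h.2 x t.prod List.prod_cons).resolve_left hx.1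
    exact ⟨x, by rw [eq_nil_of_isUnit_prod ht unit_tail]⟩

section ClsList

theorem clsList_append : clsList (l ++ m) = clsList l + clsList m := by
  simp [clsList]

theorem clsList_singleton : clsList [a] = {mkCls a} := rfl

theorem clsList_ofFn {k : ℕ} (u : Fin k → H) :
    clsList (List.ofFn u) = Finset.univ.val.map fun i => mkCls (u i) := by
  rw [Fin.univ_val_map, clsList, List.map_ofFn, Function.comp_def]

theorem clsList_ofFn_le_iff {k n : ℕ} {u : Fin k → H} {v : Fin n → H} :
    clsList (List.ofFn u) ≤ clsList (List.ofFn v) ↔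
      ∃ σ : Fin k ↪ Fin n, ∀ i, TAssoc (u i) (v (σ i)) := by
  simp only [clsList_ofFn, map_univ_le_map_univ_iff_exists_embedding, mkCls_eq_mkCls_iff]

theorem clsList_ofFn_eq_iff {k n : ℕ} {u : Fin k → H} {v : Fin n → H} :
    clsList (List.ofFn u) = clsList (List.ofFn v) ↔
      ∃ σ : Fin k ≃ Fin n, ∀ i, TAssoc (u i) (v (σ i)) := by
  simp only [clsList_ofFn, map_univ_eq_map_univ_iff_exists_equiv, mkCls_eq_mkCls_iff]

theorem countAssoc_eq_count [DecidableEq (AClass H)] (l : List H) (q : H) :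
    countAssoc l q = (clsList l).count (mkCls q) := by
  classical
  rw [← l.ofFn_get, clsList_ofFn, Multiset.count_map, List.ofFn_get, countAssoc,
    Nat.card_eq_fintype_card, Fintype.card_subtype]
  simp only [← mkCls_eq_mkCls_iff, eq_comm (a := mkCls q)]
  rfl

end ClsList

section ZpSet

variable {s t : Multiset (AClass H)}

theorem clsList_mem_zpSet_prod (hl : ∀ u ∈ l, MAtom u) : clsList l ∈ ZpSet l.prod :=
  ⟨1, l, hl, by simp, rfl⟩

theorem units_mul_mem_zpSet (hs : s ∈ ZpSet a) (ε : Hˣ) : s ∈ ZpSet (ε * a) := by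
  obtain ⟨δ, l, hl, rfl, rfl⟩ := hs
  exact ⟨ε * δ, l, hl, by simp [mul_assoc], rfl⟩

-- The unit is absorbed into the last atom.
theorem mul_units_mem_zpSet (hs : s ∈ ZpSet a) (η : Hˣ) : s ∈ ZpSet (a * η) := by
  obtain ⟨ε, l, hl, rfl, rfl⟩ := hs
  rcases List.eq_nil_or_concat' l with rfl | ⟨t, x, rfl⟩
  · exact ⟨ε * η, [], hl, by simp, rfl⟩
  · have hx : TAssoc x (x * η) := ⟨1, η, by simp⟩
    rw [List.forall_mem_append, List.forall_mem_singleton] at hl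
    refine ⟨ε, t ++ [x * η], ?_, by simp [mul_assoc], ?_⟩
    · rw [List.forall_mem_append, List.forall_mem_singleton]
      exact ⟨hl.1, hl.2.of_tassoc hx⟩
    · simp only [clsList_append, clsList_singleton, mkCls_eq_mkCls_iff.2 hx]

theorem mem_zpSet_of_tassoc (hs : s ∈ ZpSet a) (h : TAssoc a b) : s ∈ ZpSet b := by
  obtain ⟨ε, η, rfl⟩ := h
  exact mul_units_mem_zpSet (units_mul_mem_zpSet hs ε) η

theorem mem_zpSet_iff :
    s ∈ ZpSet a ↔ ∃ l : List H, (∀ u ∈ l, MAtom u) ∧ TAssoc a l.prod ∧ clsList l = s := by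
  constructor
  · rintro ⟨ε, l, hl, rfl, rfl⟩
    exact ⟨l, hl, ⟨ε⁻¹, 1, by simp⟩, rfl⟩
  · rintro ⟨l, hl, h, rfl⟩
    exact mem_zpSet_of_tassoc (clsList_mem_zpSet_prod hl) h.symm

theorem add_mem_zpSet_mul (hs : s ∈ ZpSet a) (ht : t ∈ ZpSet b) : s + t ∈ ZpSet (a * b) := by
  obtain ⟨δ, m, hm, rfl, rfl⟩ := ht
  obtain ⟨ε, l, hl, hprod, rfl⟩ := mul_units_mem_zpSet hs δ
  refine ⟨ε, l ++ m, List.forall_mem_append.2 ⟨hl, hm⟩, ?_, clsList_append.symm⟩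
  rw [← mul_assoc, hprod, List.prod_append, mul_assoc]

theorem zpSet_nonempty (hH : Atomic H) (a : H) : (ZpSet a).Nonempty := by
  by_cases ha : IsUnit a
  · obtain ⟨ε, rfl⟩ := ha
    exact ⟨clsList [], ε, [], by simp, by simp, rfl⟩
  · obtain ⟨l, -, hl, rfl⟩ := hH a ha
    exact ⟨clsList l, clsList_mem_zpSet_prod hl⟩

theorem MAtom.zpSet_eq (hq : MAtom q) : ZpSet q = {{mkCls q}} := by
  ext s
  rw [mem_zpSet_iff, Set.mem_singleton_iff]
  constructor
  · rintro ⟨l, hl, h, rfl⟩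
    obtain ⟨x, rfl⟩ := exists_eq_singleton_of_matom_prod hl (hq.of_tassoc h)
    rw [List.prod_singleton] at h
    rw [clsList_singleton, mkCls_eq_mkCls_iff.2 h]
  · rintro rfl
    exact ⟨[q], by simpa using hq, ⟨1, 1, by simp⟩, rfl⟩

theorem matom_of_mkCls_mem (hs : s ∈ ZpSet a) (hq : mkCls q ∈ s) : MAtom q := by
  obtain ⟨ε, l, hl, -, rfl⟩ := hs
  obtain ⟨x, hx, hxq⟩ := List.mem_map.1 (Multiset.mem_coe.1 hq)
  exact (hl x hx).of_tassoc (mkCls_eq_mkCls_iff.1 hxq)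

theorem eq_zero_of_mem_zpSet (ha : IsUnit a) (hs : s ∈ ZpSet a) : s = 0 := by
  obtain ⟨ε, l, hl, rfl, rfl⟩ := hs
  rw [eq_nil_of_isUnit_prod hl ((Units.isUnit_units_mul ε _).1 ha)]
  rfl

theorem exists_prod_eq_of_mem_zpSet (ha : ¬ IsUnit a) (hs : s ∈ ZpSet a) :
    ∃ l : List H, (∀ u ∈ l, MAtom u) ∧ l.prod = a ∧ clsList l = s := by
  obtain ⟨ε, l, hl, rfl, rfl⟩ := hs
  cases l with
  | nil => exact absurd (by simp) ha
  | cons x t =>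
    have hx : TAssoc x (ε * x) := ⟨ε, 1, by simp⟩
    obtain ⟨hx_atom, ht⟩ := List.forall_mem_cons.1 hl
    refine ⟨ε * x :: t, List.forall_mem_cons.2 ⟨hx_atom.of_tassoc hx, ht⟩, ?_, ?_⟩
    · simp only [List.prod_cons, mul_assoc]
    · simp only [clsList, List.map_cons, mkCls_eq_mkCls_iff.2 hx]

end ZpSet

section PermutablyFactorial

theorem PermutablyFactorial.clsList_eq (h : PermutablyFactorial H) (hl : ∀ u ∈ l, MAtom u)
    (hm : ∀ u ∈ m, MAtom u) (hprod : l.prod = m.prod) : clsList l = clsList m := by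
  induction l using List.ofFnRec with | h k u =>
  induction m using List.ofFnRec with | h n v =>
  rw [List.forall_mem_ofFn_iff] at hl hm
  exact clsList_ofFn_eq_iff.2 (h.2 k n u v hl hm hprod)

theorem PermutablyFactorial.zpSet_subsingleton (h : PermutablyFactorial H) (a : H) :
    (ZpSet a).Subsingleton := by
  intro s hs t ht
  by_cases ha : IsUnit a
  · rw [eq_zero_of_mem_zpSet ha hs, eq_zero_of_mem_zpSet ha ht]
  · obtain ⟨l, hl, rfl, rfl⟩ := exists_prod_eq_of_mem_zpSet ha hs
    obtain ⟨m, hm, hprod, rfl⟩ := exists_prod_eq_of_mem_zpSet ha ht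
    exact h.clsList_eq hl hm hprod.symm

theorem permutablyFactorial_iff_zpSet_subsingleton (hH : Atomic H) :
    PermutablyFactorial H ↔ ∀ a : H, (ZpSet a).Subsingleton := by
  refine ⟨PermutablyFactorial.zpSet_subsingleton, fun h => ⟨hH, fun k n u v hu hv hprod => ?_⟩⟩
  rw [← clsList_ofFn_eq_iff]
  rw [← List.forall_mem_ofFn_iff] at hu hv
  exact h _ (clsList_mem_zpSet_prod hu) (hprod ▸ clsList_mem_zpSet_prod hv)

end PermutablyFactorial

section PrimeLike

theorem dvdP_iff_exists_le : dvdP a b ↔ ∃ s ∈ ZpSet a, ∃ t ∈ ZpSet b, s ≤ t := by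
  constructor
  · rintro ⟨k, n, u, v, hu, hv, ha, hb, hσ⟩
    rw [← List.forall_mem_ofFn_iff] at hu hv
    exact ⟨_, mem_zpSet_iff.2 ⟨_, hu, ha, rfl⟩, _, mem_zpSet_iff.2 ⟨_, hv, hb, rfl⟩,
      clsList_ofFn_le_iff.2 hσ⟩
  · rintro ⟨s, hs, t, ht, hle⟩
    obtain ⟨l, hl, ha, rfl⟩ := mem_zpSet_iff.1 hs
    obtain ⟨m, hm, hb, rfl⟩ := mem_zpSet_iff.1 ht
    induction l using List.ofFnRec with | h k u =>
    induction m using List.ofFnRec with | h n v =>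
    rw [List.forall_mem_ofFn_iff] at hl hm
    exact ⟨k, n, u, v, hl, hm, ha, hb, clsList_ofFn_le_iff.1 hle⟩

theorem MAtom.dvdP_iff (hq : MAtom q) : dvdP q a ↔ ∃ s ∈ ZpSet a, mkCls q ∈ s := by
  simp only [dvdP_iff_exists_le, hq.zpSet_eq, Set.mem_singleton_iff, exists_eq_left,
    Multiset.singleton_le]

theorem vq_eq_image_count [DecidableEq (AClass H)] :
    Vq q a = Multiset.count (mkCls q) '' ZpSet a := by
  ext n
  constructor
  · rintro ⟨l, hl, h, rfl⟩
    exact ⟨clsList l, mem_zpSet_iff.2 ⟨l, hl, h, rfl⟩, (countAssoc_eq_count l q).symm⟩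
  · rintro ⟨s, hs, rfl⟩
    obtain ⟨l, hl, h, rfl⟩ := mem_zpSet_iff.1 hs
    exact ⟨l, hl, h, countAssoc_eq_count l q⟩

theorem APLike.primeLike_of_zpSet_subsingleton (hq : APLike q) (hH : Atomic H)
    (h : ∀ a : H, (ZpSet a).Subsingleton) : PrimeLike q := by
  classical
  refine ⟨hq, fun a => ?_⟩
  rw [vq_eq_image_count, Set.exists_eq_singleton_iff_nonempty_subsingleton]
  exact ⟨(zpSet_nonempty hH a).image _, (h a).image _⟩

theorem zpSet_subsingleton_of_forall_primeLike (h : ∀ q : H, MAtom q → PrimeLike q) (a : H) :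
    (ZpSet a).Subsingleton := by
  classical
  intro s hs t ht
  ext c
  obtain ⟨q, rfl⟩ : ∃ q, mkCls q = c := Quotient.exists_rep c
  by_cases hq : MAtom q
  · obtain ⟨n, hn⟩ := (h q hq).2 a
    have count_eq {r : Multiset (AClass H)} (hr : r ∈ ZpSet a) : r.count (mkCls q) = n := by
      rw [← Set.mem_singleton_iff, ← hn, vq_eq_image_count]
      exact Set.mem_image_of_mem _ hr
    rw [count_eq hs, count_eq ht]
  · rw [Multiset.count_eq_zero_of_notMem fun hqs => hq (matom_of_mkCls_mem hs hqs),
      Multiset.count_eq_zero_of_notMem fun hqt => hq (matom_of_mkCls_mem ht hqt)]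

end PrimeLike

section TameDegree

theorem tpEl_eq_zero_iff {x : Multiset (AClass H)} :
    tpEl a x = 0 ↔ ((∃ z₀ ∈ ZpSet a, x ≤ z₀) → ∀ z ∈ ZpSet a, x ≤ z) := by
  have contained_at_distance_zero {z : Multiset (AClass H)} (hz : z ∈ ZpSet a) :
      (∃ z' ∈ ZpSet a, x ≤ z' ∧ (mdist z z' : ℕ∞) ≤ 0) ↔ x ≤ z := by
    simp [mdist_eq_zero_iff, hz]
  rw [tpEl, ENat.sInf_eq_zero, Set.mem_ofPred_eq]
  exact imp_congr_right fun _ => forall₂_congr fun _ => contained_at_distance_zero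

theorem tpMon_eq_zero_iff : tpMon H = 0 ↔ ∀ u : H, MAtom u → ∀ a : H, tpEl a {mkCls u} = 0 := by
  simp only [tpMon, ENat.iSup_eq_zero]

theorem tpMon_le_tpZpMon : tpMon H ≤ tpZpMon H := by
  refine iSup₂_le fun u hu => iSup_le fun a => ?_
  have singleton_mem : {mkCls u} ∈ ZpSet u := by rw [hu.zpSet_eq, Set.mem_singleton_iff]
  exact le_iSup_of_le a (le_iSup₂_of_le {mkCls u} ⟨u, singleton_mem⟩ le_rfl)

theorem tpZpMon_eq_zero_of_zpSet_subsingleton (h : ∀ a : H, (ZpSet a).Subsingleton) :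
    tpZpMon H = 0 := by
  simp only [tpZpMon, ENat.iSup_eq_zero, tpEl_eq_zero_iff]
  rintro a x - ⟨z₀, hz₀, hx⟩ z hz
  rwa [h a hz hz₀]

theorem MAtom.apLike_of_tpEl_eq_zero (hq : MAtom q) (hH : Atomic H)
    (h : ∀ a : H, tpEl a {mkCls q} = 0) : APLike q := by
  refine ⟨hq.1, fun a b hab => ?_⟩
  obtain ⟨z, hz, hqz⟩ := hq.dvdP_iff.1 hab
  obtain ⟨s, hs⟩ := zpSet_nonempty hH a
  obtain ⟨t, ht⟩ := zpSet_nonempty hH b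
  have mem_add : mkCls q ∈ s + t := Multiset.singleton_le.1 <|
    tpEl_eq_zero_iff.1 (h (a * b)) ⟨z, hz, Multiset.singleton_le.2 hqz⟩ _ (add_mem_zpSet_mul hs ht)
  exact (Multiset.mem_add.1 mem_add).imp (fun hqs => hq.dvdP_iff.2 ⟨s, hs, hqs⟩)
    (fun hqt => hq.dvdP_iff.2 ⟨t, ht, hqt⟩)

end TameDegree

end Factorizations

theorem permutablyFactorial_iff_tame_general {H : Type*} [Monoid H] (hH : Atomic H) :
    (PermutablyFactorial H ↔ (tpMon H = 0 ∧ ∀ q : H, APLike q → PrimeLike q)) ∧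
    (PermutablyFactorial H ↔ (tpZpMon H = 0 ∧ ∀ q : H, APLike q → PrimeLike q)) := by
  have tpMon_eq_zero (h : tpZpMon H = 0) : tpMon H = 0 :=
    le_antisymm (h ▸ tpMon_le_tpZpMon) zero_le
  have tame (h : PermutablyFactorial H) :
      tpZpMon H = 0 ∧ ∀ q : H, APLike q → PrimeLike q :=
    ⟨tpZpMon_eq_zero_of_zpSet_subsingleton h.zpSet_subsingleton,
      fun _ hq => hq.primeLike_of_zpSet_subsingleton hH h.zpSet_subsingleton⟩
  have factorial (h₀ : tpMon H = 0) (h : ∀ q : H, APLike q → PrimeLike q) :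
      PermutablyFactorial H := by
    rw [permutablyFactorial_iff_zpSet_subsingleton hH]
    exact zpSet_subsingleton_of_forall_primeLike fun q hq =>
      h q (hq.apLike_of_tpEl_eq_zero hH (tpMon_eq_zero_iff.1 h₀ q hq))
  exact ⟨⟨fun h => ⟨tpMon_eq_zero (tame h).1, (tame h).2⟩, fun h => factorial h.1 h.2⟩,
    ⟨tame, fun h => factorial (tpMon_eq_zero h.1) h.2⟩⟩

/-- For an atomic cancellative monoid `H`: `H` is permutably factorial
iff `t_p(H) = 0` and every almost prime-like element is prime-like, iff
`t_p(H, Z_p(H)) = 0` and every almost prime-like element is prime-like. -/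
theorem permutablyFactorial_iff_tame {H : Type*} [CancelMonoid H] (hH : Atomic H) :
    (PermutablyFactorial H ↔ (tpMon H = 0 ∧ ∀ q : H, APLike q → PrimeLike q)) ∧
    (PermutablyFactorial H ↔ (tpZpMon H = 0 ∧ ∀ q : H, APLike q → PrimeLike q)) :=
  permutablyFactorial_iff_tame_general hH
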